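/- For all integers n ≥ 2, d ≥ 2, set R = n^(3d+10) and r = n^(2d+10). Run UNFAIR with n bins and d choices, and partition an initialization period into C(n,2) consecutive phases of length R, one phase φ_{i,j} for each unordered pair of distinct bins {B_i, B_j}. Let X be the event that for every pair {i,j}, the combined number of balls placed in B_i and B_j during phase φ_{i,j} is at least r. Then Pr(X) ≥ 1 − O(n²·e^(−n^(d+10))). -/

import Mathlib

namespace Unfair

/-- Loads of the `n` bins, starting from `init`, after the balls recorded in `l`
have been placed (each entry of `l` is the bin that received a ball). -/
def loadsOf (n : ℕ) (init : Fin n → ℕ) (l : List (Fin n)) : Fin n → ℕ :=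
  fun b => init b + l.count b

/-- One step of UNFAIR: draw `d` options uniformly from `{1,…,n}^d` (with replacement)
and return the most-loaded option bin, ties broken uniformly at random. -/
noncomputable def stepBin (n d : ℕ) (hn : 0 < n) (hd : 0 < d) (L : Fin n → ℕ) :
    PMF (Fin n) :=
  haveI : NeZero n := ⟨hn.ne'⟩
  haveI : NeZero d := ⟨hd.ne'⟩
  (PMF.uniformOfFintype (Fin d → Fin n)).bind fun opts =>
    PMF.uniformOfFinset
      ((Finset.univ.image opts).filter fun b => ∀ k, L (opts k) ≤ L b)
      (by
        classical
        obtain ⟨b, hb, hmax⟩ := Finset.exists_max_image (Finset.univ.image opts) L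
          (Finset.univ_nonempty.image opts)
        exact ⟨b, Finset.mem_filter.2 ⟨hb, fun k =>
          hmax _ (Finset.mem_image_of_mem _ (Finset.mem_univ k))⟩⟩)

/-- The permutations of `Fin n` that sort the loads `L`: `σ` maps rank (0-indexed,
least-loaded first) to bin, so `L ∘ σ` is monotone. -/
noncomputable def compatPerms (n : ℕ) (L : Fin n → ℕ) : Finset (Equiv.Perm (Fin n)) :=
  @Finset.filter _ (fun σ => Monotone fun i => L (σ i)) (Classical.decPred _) Finset.univ

/-- A uniformly random ranking of the bins by load, ties broken uniformly at random:
a uniform element of the sorting permutations of `L`. -/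
noncomputable def rankPMF (n : ℕ) (L : Fin n → ℕ) : PMF (Equiv.Perm (Fin n)) :=
  PMF.uniformOfFinset (compatPerms n L)
    ⟨Tuple.sort L, by
      simp only [compatPerms, Finset.mem_filter, Finset.mem_univ, true_and]
      exact Tuple.monotone_sort L⟩

/-- The UNFAIR process, run for `m` steps from initial loads `init`.  The outcome is the
history: at each step we record the bin that received the ball together with a uniformly
random load-ranking of the bins (ties broken uniformly at random) just after that step. -/
noncomputable def proc (n d : ℕ) (hn : 0 < n) (hd : 0 < d) (init : Fin n → ℕ) :
    ℕ → PMF (List (Fin n × Equiv.Perm (Fin n)))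
  | 0 => PMF.pure []
  | (m + 1) => (proc n d hn hd init m).bind fun hist =>
      (stepBin n d hn hd (loadsOf n init (hist.map Prod.fst))).bind fun b =>
        (rankPMF n (loadsOf n init (hist.map Prod.fst ++ [b]))).bind fun σ =>
          PMF.pure (hist ++ [(b, σ)])

/-- The loads at time `t` along a history `h`. -/
def trajLoads (n : ℕ) (init : Fin n → ℕ) (h : List (Fin n × Equiv.Perm (Fin n)))
    (t : ℕ) : Fin n → ℕ :=
  loadsOf n init ((h.map Prod.fst).take t)

/-- The ranking permutation at time `s ≥ 1` along a history `h`
(maps rank, 0-indexed least-loaded first, to bin). -/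
def trajRank (n : ℕ) (h : List (Fin n × Equiv.Perm (Fin n))) (s : ℕ) :
    Equiv.Perm (Fin n) :=
  (h.map Prod.snd).getD (s - 1) 1

/-- The load of the `i`-th least-loaded bin (0-indexed) for loads `L`. -/
noncomputable def sortedLoad (n : ℕ) (L : Fin n → ℕ) (i : Fin n) : ℕ :=
  L (Tuple.sort L i)

/-- Expectation of `f` under the distribution `p`. -/
noncomputable def pexp {α : Type*} (p : PMF α) (f : α → ℝ) : ℝ :=
  ∑' a, (p a).toReal * f a

/-- Probability of the event `S` under the distribution `p`, as a real number. -/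
noncomputable def prob {α : Type*} (p : PMF α) (S : Set α) : ℝ :=
  (p.toOuterMeasure S).toReal

end Unfair

/-!
Whatever the loads are, a ball lands in a set `S` of bins as soon as all `d` options lie in `S`,
so it does with conditional probability at least `(#S / n) ^ d`. The number of balls in `S` during
`R` consecutive steps is therefore governed by Chernoff's method: each step multiplies the
expectation of `exp (-t N)` by at most `exp (-(1 - exp (-t)) (#S / n) ^ d)`. For a pair of bins and
`t = 1`, the decay `(1 - exp (-1)) 2 ^ d R / n ^ d ≥ 2 R / n ^ d` is at least twice the threshold
`r` when `R ≥ n ^ d r`, so the phase fails with probability at most `exp (-r)`. A union bound over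
the pairs finishes the proof.
-/

namespace Unfair

open scoped ENNReal Finset

section PMF

variable {α β ι : Type*}

lemma toOuterMeasure_univ (p : PMF α) : p.toOuterMeasure Set.univ = 1 :=
  (p.toOuterMeasure_apply_eq_one_iff _).2 (Set.subset_univ _)

lemma toOuterMeasure_ne_top (p : PMF α) (S : Set α) : p.toOuterMeasure S ≠ ∞ :=
  ne_top_of_le_ne_top ENNReal.one_ne_top <|
    (p.toOuterMeasure.mono S.subset_univ).trans_eq (toOuterMeasure_univ p)

lemma ofReal_prob (p : PMF α) (S : Set α) : ENNReal.ofReal (prob p S) = p.toOuterMeasure S :=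
  ENNReal.ofReal_toReal (toOuterMeasure_ne_top p S)

lemma prob_mono (p : PMF α) {S T : Set α} (h : S ⊆ T) : prob p S ≤ prob p T :=
  ENNReal.toReal_mono (toOuterMeasure_ne_top p T) (p.toOuterMeasure.mono h)

lemma prob_map (p : PMF α) (f : α → β) (S : Set β) : prob (p.map f) S = prob p (f ⁻¹' S) := by
  rw [prob, prob, PMF.toOuterMeasure_map_apply]

lemma prob_le_prob_bind (p : PMF α) (g : α → PMF β) {A : Set α} {B : Set β}
    (h : ∀ a ∈ A, (g a).support ⊆ B) : prob p A ≤ prob (p.bind g) B := by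
  refine ENNReal.toReal_mono (toOuterMeasure_ne_top _ _) ?_
  rw [PMF.toOuterMeasure_apply, PMF.toOuterMeasure_bind_apply]
  refine ENNReal.tsum_le_tsum fun a => Set.indicator_apply_le' (fun ha => ?_) fun _ => zero_le
  rw [((g a).toOuterMeasure_apply_eq_one_iff B).2 (h a ha), mul_one]

lemma bind_congr {p : PMF α} {g g₂ : α → PMF β} (h : ∀ a ∈ p.support, g a = g₂ a) :
    p.bind g = p.bind g₂ := by
  ext b
  refine tsum_congr fun a => ?_
  by_cases ha : a ∈ p.support
  · rw [h a ha]
  · simp [(p.apply_eq_zero_iff a).2 ha]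

lemma prob_uniformOfFintype_finset [Fintype α] [Nonempty α] (A : Finset α) :
    prob (PMF.uniformOfFintype α) A = #A / Fintype.card α := by
  rw [prob, PMF.toOuterMeasure_apply_finset]
  simp [div_eq_mul_inv]

lemma one_sub_card_mul_le_prob_forall (p : PMF α) (s : Finset ι) {E : ι → Set α} {ε : ℝ}
    (hE : ∀ k ∈ s, prob p (E k)ᶜ ≤ ε) : 1 - #s * ε ≤ prob p {a | ∀ k ∈ s, a ∈ E k} := by
  set G : Set α := {a | ∀ k ∈ s, a ∈ E k}
  have hcover : Set.univ ⊆ G ∪ ⋃ k ∈ s, (E k)ᶜ := fun a _ => by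
    by_cases ha : a ∈ G
    · exact Or.inl ha
    · exact Or.inr (by simpa [G] using ha)
  have hone : 1 ≤ p.toOuterMeasure G + ∑ k ∈ s, p.toOuterMeasure (E k)ᶜ := calc
    1 = p.toOuterMeasure Set.univ := (toOuterMeasure_univ p).symm
    _ ≤ p.toOuterMeasure (G ∪ ⋃ k ∈ s, (E k)ᶜ) := p.toOuterMeasure.mono hcover
    _ ≤ p.toOuterMeasure G + p.toOuterMeasure (⋃ k ∈ s, (E k)ᶜ) :=
      MeasureTheory.measure_union_le _ _
    _ ≤ _ := by gcongr; exact MeasureTheory.measure_biUnion_finset_le _ _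
  have hsum : ∑ k ∈ s, p.toOuterMeasure (E k)ᶜ ≠ ∞ :=
    ENNReal.sum_ne_top.2 fun k _ => toOuterMeasure_ne_top p _
  have hreal : 1 ≤ prob p G + ∑ k ∈ s, prob p (E k)ᶜ := by
    have := ENNReal.toReal_mono (ENNReal.add_ne_top.2 ⟨toOuterMeasure_ne_top p G, hsum⟩) hone
    rwa [ENNReal.toReal_one, ENNReal.toReal_add (toOuterMeasure_ne_top p G) hsum,
      ENNReal.toReal_sum fun k _ => toOuterMeasure_ne_top p _] at this
  have hbad : ∑ k ∈ s, prob p (E k)ᶜ ≤ #s * ε := by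
    simpa [nsmul_eq_mul] using Finset.sum_le_card_nsmul s _ ε hE
  linarith

/-- Expectation of an extended nonnegative function. Unlike for `pexp`, no summability
conditions arise. -/
noncomputable def lexp (p : PMF α) (f : α → ℝ≥0∞) : ℝ≥0∞ :=
  ∑' a, p a * f a

lemma lexp_bind (p : PMF α) (g : α → PMF β) (f : β → ℝ≥0∞) :
    lexp (p.bind g) f = lexp p fun a => lexp (g a) f := by
  simp only [lexp, PMF.bind_apply, ← ENNReal.tsum_mul_right, ← ENNReal.tsum_mul_left, mul_assoc]
  exact ENNReal.tsum_comm

lemma lexp_pure (a : α) (f : α → ℝ≥0∞) : lexp (PMF.pure a) f = f a := by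
  classical
  simp [lexp, PMF.pure_apply]

lemma lexp_map (p : PMF α) (g : α → β) (f : β → ℝ≥0∞) :
    lexp (p.map g) f = lexp p fun a => f (g a) := by
  simp only [PMF.map, lexp_bind, Function.comp_apply, lexp_pure]

lemma lexp_const (p : PMF α) (c : ℝ≥0∞) : lexp p (fun _ => c) = c := by
  rw [lexp, ENNReal.tsum_mul_right, p.tsum_coe, one_mul]

lemma lexp_add (p : PMF α) (f g : α → ℝ≥0∞) :
    lexp p (fun a => f a + g a) = lexp p f + lexp p g := by
  simp only [lexp, mul_add, ENNReal.tsum_add]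

lemma lexp_mul_left (p : PMF α) (c : ℝ≥0∞) (f : α → ℝ≥0∞) :
    lexp p (fun a => c * f a) = c * lexp p f := by
  simp only [lexp, mul_left_comm _ c, ENNReal.tsum_mul_left]

lemma lexp_mul_right (p : PMF α) (f : α → ℝ≥0∞) (c : ℝ≥0∞) :
    lexp p (fun a => f a * c) = lexp p f * c := by
  simp only [mul_comm _ c, lexp_mul_left]

lemma lexp_mono {p : PMF α} {f g : α → ℝ≥0∞} (h : ∀ a ∈ p.support, f a ≤ g a) :
    lexp p f ≤ lexp p g := by
  refine ENNReal.tsum_le_tsum fun a => ?_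
  by_cases ha : p a = 0
  · simp [ha]
  · gcongr
    exact h a ha

lemma lexp_indicator_one (p : PMF α) (S : Set α) :
    lexp p (S.indicator 1) = p.toOuterMeasure S := by
  simp only [lexp, PMF.toOuterMeasure_apply, ← Set.indicator_mul_right, Pi.one_apply, mul_one]

lemma toOuterMeasure_le_lexp (p : PMF α) {S : Set α} {f : α → ℝ≥0∞} (h : ∀ a ∈ S, 1 ≤ f a) :
    p.toOuterMeasure S ≤ lexp p f := by
  rw [← lexp_indicator_one]
  exact lexp_mono fun a _ => Set.indicator_apply_le (h a)

lemma lexp_ite_exp_neg_le (p : PMF α) (P : α → Prop) [DecidablePred P] {q t : ℝ} (ht : 0 ≤ t)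
    (hq : q ≤ prob p {a | P a}) :
    lexp p (fun a => if P a then ENNReal.ofReal (Real.exp (-t)) else 1) ≤
      ENNReal.ofReal (Real.exp (-((1 - Real.exp (-t)) * q))) := by
  set c := Real.exp (-t)
  have hc0 : 0 ≤ c := (Real.exp_pos _).le
  have hc1 : 0 ≤ 1 - c := sub_nonneg.2 (Real.exp_le_one_iff.2 (neg_nonpos.2 ht))
  have hsum : lexp p (fun a => if P a then ENNReal.ofReal c else 1) +
      ENNReal.ofReal (1 - c) * p.toOuterMeasure {a | P a} = 1 := by
    rw [← lexp_indicator_one, ← lexp_mul_left, ← lexp_add]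
    refine Eq.trans (congrArg _ (funext fun a => ?_)) (lexp_const p 1)
    by_cases ha : P a
    · simp [ha, ← ENNReal.ofReal_add hc0 hc1]
    · simp [ha]
  rw [← ofReal_prob, ← ENNReal.ofReal_mul hc1] at hsum
  calc lexp p (fun a => if P a then ENNReal.ofReal c else 1)
      = 1 - ENNReal.ofReal ((1 - c) * prob p {a | P a}) :=
        ENNReal.eq_sub_of_add_eq ENNReal.ofReal_ne_top hsum
    _ = ENNReal.ofReal (1 - (1 - c) * prob p {a | P a}) := by
        rw [ENNReal.ofReal_sub 1 (mul_nonneg hc1 ENNReal.toReal_nonneg : 0 ≤ (1 - c) * prob p _),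
          ENNReal.ofReal_one]
    _ ≤ ENNReal.ofReal (Real.exp (-((1 - c) * q))) := by
        refine ENNReal.ofReal_le_ofReal ?_
        linarith [Real.one_sub_le_exp_neg ((1 - c) * q), mul_le_mul_of_nonneg_left hq hc1]

end PMF

section History

variable {α : Type*} (step : List α → PMF α)

/-- The law of the first `m` terms of a random sequence whose next term, given the list `l` of
the earlier ones (oldest first), has law `step l`. -/
noncomputable def history : ℕ → PMF (List α)
  | 0 => PMF.pure []
  | m + 1 => (history m).bind fun l => (step l).map fun a => l ++ [a]

lemma length_of_mem_support_history {m : ℕ} {l : List α} (hl : l ∈ (history step m).support) :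
    l.length = m := by
  induction m generalizing l with
  | zero => simpa [history] using hl
  | succ m ih =>
    simp only [history, PMF.mem_support_bind_iff, PMF.mem_support_map_iff] at hl
    obtain ⟨l₀, hl₀, a, -, rfl⟩ := hl
    simp [ih hl₀]

lemma map_take_history {k m : ℕ} (hkm : k ≤ m) :
    (history step m).map (List.take k) = history step k := by
  induction m, hkm using Nat.le_induction with
  | base =>
    exact (bind_congr fun l hl => by
      rw [Function.comp_apply, List.take_of_length_le (length_of_mem_support_history step hl).le]
      ).trans (PMF.bind_pure _)
  | succ m hkm ih =>
    rw [history, PMF.map_bind, ← ih]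
    refine bind_congr fun l hl => ?_
    have htake : List.take k ∘ (fun a => l ++ [a]) = Function.const α (l.take k) := funext fun a =>
      List.take_append_of_le_length (hkm.trans_eq (length_of_mem_support_history step hl).symm)
    rw [PMF.map_comp, htake, PMF.map_const, Function.comp_apply]

lemma lexp_prod_drop_history_le {w : α → ℝ≥0∞} {b : ℝ≥0∞} (hw : ∀ l, lexp (step l) w ≤ b)
    (s R : ℕ) : lexp (history step (s + R)) (fun l => ((l.drop s).map w).prod) ≤ b ^ R := by
  induction R with
  | zero =>
    rw [add_zero, pow_zero, ← lexp_const (history step s) 1]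
    refine lexp_mono fun l hl => ?_
    rw [List.drop_eq_nil_of_le (length_of_mem_support_history step hl).le, List.map_nil,
      List.prod_nil]
  | succ R ih =>
    rw [← add_assoc, history, lexp_bind, pow_succ]
    refine (lexp_mono fun l hl => ?_).trans
      ((lexp_mul_right _ _ b).trans_le (mul_le_mul_left ih b))
    have hs : s ≤ l.length := by simp [length_of_mem_support_history step hl]
    simp only [lexp_map, List.drop_append_of_le_length hs, List.map_append, List.prod_append,
      List.map_singleton, List.prod_singleton, lexp_mul_left]
    gcongr
    exact hw l

lemma prob_history_countP_le {P : α → Prop} [DecidablePred P] {q t r : ℝ} (ht : 0 ≤ t)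
    (hq : ∀ l, q ≤ prob (step l) {a | P a}) {s R m : ℕ} (hm : s + R ≤ m) :
    prob (history step m) {l | (((l.drop s).take R).countP P : ℝ) ≤ r} ≤
      Real.exp (t * r - (1 - Real.exp (-t)) * q * R) := by
  set c := ENNReal.ofReal (Real.exp (-t))
  set S : Set (List α) := {l | ((l.drop s).countP P : ℝ) ≤ r}
  have hevent : {l : List α | (((l.drop s).take R).countP P : ℝ) ≤ r} =
      List.take (s + R) ⁻¹' S := by
    ext l
    simp [S, List.drop_take]
  rw [hevent, ← prob_map, map_take_history step hm]
  have hprod (l : List α) : (l.map fun a => if P a then c else 1).prod = c ^ l.countP P := by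
    simp [List.prod_map_ite, List.countP_eq_length_filter]
  refine ENNReal.toReal_le_of_le_ofReal (Real.exp_pos _).le ?_
  calc (history step (s + R)).toOuterMeasure S
      ≤ lexp (history step (s + R)) fun l => ENNReal.ofReal (Real.exp (t * r)) *
          ((l.drop s).map fun a => if P a then c else 1).prod := by
        refine toOuterMeasure_le_lexp _ fun l hl => ?_
        rw [hprod, ← ENNReal.ofReal_pow (Real.exp_pos _).le,
          ← ENNReal.ofReal_mul (Real.exp_pos _).le, ← Real.exp_nat_mul, ← Real.exp_add,
          ENNReal.one_le_ofReal, Real.one_le_exp_iff]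
        linarith [mul_le_mul_of_nonneg_left hl.out ht]
    _ ≤ ENNReal.ofReal (Real.exp (t * r)) *
          ENNReal.ofReal (Real.exp (-((1 - Real.exp (-t)) * q))) ^ R := by
        rw [lexp_mul_left]
        gcongr
        exact lexp_prod_drop_history_le step
          (fun l => lexp_ite_exp_neg_le (step l) P ht (hq l)) s R
    _ = ENNReal.ofReal (Real.exp (t * r - (1 - Real.exp (-t)) * q * R)) := by
        rw [← ENNReal.ofReal_pow (Real.exp_pos _).le, ← ENNReal.ofReal_mul (Real.exp_pos _).le,
          ← Real.exp_nat_mul, ← Real.exp_add]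
        ring_nf

end History

section BallsInBins

variable {n d : ℕ} (hn : 0 < n) (hd : 0 < d) (init : Fin n → ℕ)

lemma card_div_pow_le_prob_stepBin (L : Fin n → ℕ) (S : Finset (Fin n)) :
    ((#S : ℝ) / n) ^ d ≤ prob (stepBin n d hn hd L) S := by
  have : NeZero n := ⟨hn.ne'⟩
  have : NeZero d := ⟨hd.ne'⟩
  calc ((#S : ℝ) / n) ^ d
      = prob (PMF.uniformOfFintype (Fin d → Fin n)) ↑(Fintype.piFinset fun _ : Fin d => S) := by
        rw [prob_uniformOfFintype_finset]
        simp [div_pow]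
    _ ≤ prob (stepBin n d hn hd L) S := by
        refine prob_le_prob_bind _ _ fun opts hopts b hb => ?_
        have hmem : ∀ k, opts k ∈ S := by simpa using hopts
        obtain ⟨⟨k, rfl⟩, -⟩ : (∃ k, opts k = b) ∧ ∀ k, L (opts k) ≤ L b := by simpa using hb
        exact hmem k

lemma map_fst_proc (m : ℕ) :
    (proc n d hn hd init m).map (List.map Prod.fst) =
      history (fun l => stepBin n d hn hd (loadsOf n init l)) m := by
  induction m with
  | zero => simp [proc, history, PMF.pure_map]
  | succ m ih =>
    simp only [proc, history, ← ih, PMF.map_bind, PMF.bind_map, PMF.pure_map, List.map_append,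
      List.map_singleton, PMF.bind_const]
    rfl

/-- The bins that received the `R` balls following the first `s` ones along a history `h`: the
phase of length `R` that starts at time `s`. -/
def window (h : List (Fin n × Equiv.Perm (Fin n))) (s R : ℕ) : List (Fin n) :=
  ((h.map Prod.fst).drop s).take R

lemma prob_proc_countP_le (S : Finset (Fin n)) {t r : ℝ} (ht : 0 ≤ t) {s R m : ℕ}
    (hm : s + R ≤ m) :
    prob (proc n d hn hd init m) {h | ((window h s R).countP (· ∈ S) : ℝ) ≤ r} ≤
      Real.exp (t * r - (1 - Real.exp (-t)) * (#S / n : ℝ) ^ d * R) := by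
  have htail := prob_history_countP_le _ ht
    (fun l => card_div_pow_le_prob_stepBin hn hd (loadsOf n init l) S) (r := r) hm
  rwa [← map_fst_proc, prob_map] at htail

lemma count_add_count_eq_countP {α : Type*} [DecidableEq α] {i j : α} (hij : i ≠ j)
    (l : List α) : l.count i + l.count j = l.countP (· ∈ ({i, j} : Finset α)) := by
  induction l with
  | nil => rfl
  | cons a l ih => grind

lemma prob_proc_count_add_count_lt (hd2 : 2 ≤ d) {i j : Fin n} (hij : i ≠ j) {r s R m : ℕ}
    (hR : n ^ d * r ≤ R) (hm : s + R ≤ m) :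
    prob (proc n d hn (two_pos.trans_le hd2) init m)
        {h | (window h s R).count i + (window h s R).count j < r} ≤ Real.exp (-r) := by
  have htail := prob_proc_countP_le hn (two_pos.trans_le hd2) init {i, j} zero_le_one (r := r) hm
  rw [Finset.card_pair hij, Nat.cast_two] at htail
  have hcount : (4 : ℝ) * r ≤ (2 / n : ℝ) ^ d * R := calc
    (4 : ℝ) * r = 2 ^ 2 * r := by norm_num
    _ ≤ 2 ^ d * r := by gcongr; exact one_le_two
    _ = (2 / n : ℝ) ^ d * (n ^ d * r) := by
      rw [← mul_assoc, ← mul_pow, div_mul_cancel₀ _ (by positivity)]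
    _ ≤ (2 / n : ℝ) ^ d * R := by gcongr; exact_mod_cast hR
  refine (prob_mono _ fun h hh => ?_).trans (htail.trans (Real.exp_le_exp.2 ?_))
  · rw [Set.mem_ofPred_eq, count_add_count_eq_countP hij] at hh
    exact_mod_cast hh.le
  · have hhalf : 1 / 2 ≤ 1 - Real.exp (-1) := by linarith [Real.exp_neg_one_lt_half]
    linarith [mul_le_mul hhalf hcount (by positivity) (by linarith)]

end BallsInBins

end Unfair

open Unfair in
theorem unfair_phase_balls_general {n d : ℕ} (hn : 0 < n) (hd : 2 ≤ d) (init : Fin n → ℕ)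
    {r R m : ℕ} (hR : n ^ d * r ≤ R) {start : Fin n → Fin n → ℕ}
    (hstart : ∀ i j, i ≠ j → start i j + R ≤ m) :
    1 - (n : ℝ) ^ 2 * Real.exp (-r) ≤ prob (proc n d hn (two_pos.trans_le hd) init m)
      {h | ∀ i j : Fin n, i ≠ j →
        r ≤ (window h (start i j) R).count i + (window h (start i j) R).count j} := by
  set p := proc n d hn (two_pos.trans_le hd) init m
  let E (k : Fin n × Fin n) : Set (List (Fin n × Equiv.Perm (Fin n))) :=
    {h | r ≤ (window h (start k.1 k.2) R).count k.1 + (window h (start k.1 k.2) R).count k.2}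
  have hfail : ∀ k ∈ Finset.univ.offDiag, prob p (E k)ᶜ ≤ Real.exp (-r) := fun k hk => by
    have hne : k.1 ≠ k.2 := by simpa using hk
    simpa only [E, Set.compl_ofPred, not_le] using
      prob_proc_count_add_count_lt hn init hd hne hR (hstart k.1 k.2 hne)
  have hpairs : ((Finset.univ : Finset (Fin n)).offDiag.card : ℝ) ≤ (n : ℝ) ^ 2 := by
    rw [Finset.offDiag_card, Finset.card_fin, sq]
    exact_mod_cast Nat.sub_le _ _
  have hE : 1 - (n : ℝ) ^ 2 * Real.exp (-r) ≤ prob p {h | ∀ k ∈ Finset.univ.offDiag, h ∈ E k} :=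
    le_trans (by gcongr) (one_sub_card_mul_le_prob_forall p _ hfail)
  exact hE.trans (prob_mono p fun h hh i j hij => hh (i, j) (by simpa using hij))

open Unfair in
/-- **Initialization phases get enough balls.** For `n ≥ 2`, `d ≥ 2`, set
`R = n^(3d+10)` and `r = n^(2d+10)`.  Run UNFAIR from empty bins for
`C(n,2)·R` steps, partitioned into `C(n,2)` consecutive phases of length `R`, one phase
`φ_{i,j}` (indexed by `ph i j`) for each unordered pair of distinct bins.  Let `X` be
the event that each pair `{i,j}` receives at least `r` balls combined during its phase.
Then `Pr(X) ≥ 1 − O(n²·e^(−n^(d+10)))`. -/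
theorem unfair_phase_balls (d : ℕ) (hd2 : 2 ≤ d) :
    ∃ C : ℝ, 0 < C ∧
      ∀ n : ℕ, ∀ hn2 : 2 ≤ n,
        ∀ ph : Fin n → Fin n → ℕ,
          (∀ i j, ph i j = ph j i) →
          (∀ i j, i ≠ j → ph i j < n.choose 2) →
          (∀ i j k l, i ≠ j → k ≠ l → ph i j = ph k l →
            (i = k ∧ j = l) ∨ (i = l ∧ j = k)) →
          1 - C * (n : ℝ) ^ 2 * Real.exp (-(n : ℝ) ^ (d + 10)) ≤
            prob (proc n d (by omega) (by omega) 0 (n.choose 2 * n ^ (3 * d + 10)))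
              {h | ∀ i j : Fin n, i ≠ j →
                n ^ (2 * d + 10) ≤
                  (((h.map Prod.fst).drop (ph i j * n ^ (3 * d + 10))).take
                      (n ^ (3 * d + 10))).count i +
                  (((h.map Prod.fst).drop (ph i j * n ^ (3 * d + 10))).take
                      (n ^ (3 * d + 10))).count j} := by
  refine ⟨1, one_pos, fun n hn ph _ hph _ => le_trans ?_ <| unfair_phase_balls_general
    (by omega) hd2 0 (r := n ^ (2 * d + 10)) (by ring_nf; rfl)
    fun i j hij => (Nat.succ_mul _ _).symm.trans_le (Nat.mul_le_mul_right _ (hph i j hij))⟩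
  rw [one_mul, Nat.cast_pow]
  gcongr
  · exact_mod_cast one_le_two.trans hn
  · omega
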